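/- Let (A, φ) be a *-probability space with φ tracial (φ(ab) = φ(ba) for all a, b ∈ A), let u ∈ A be a unitary (u*u = uu* = 1), and let x, y ∈ A. If both the pair (x, y) and the pair (ux, uy) satisfy condition (3.6), then (x, y) and (ux, uy) have the same bi-*-distribution. -/

import Mathlib

section
variable {A : Type*} [Ring A] [Algebra ℂ A] [StarRing A] [StarModule ℂ A]

/-- The alternating product `x^{ω(1)} ⋯ x^{ω(k₁)} y^{ω(k₁+1)} ⋯ y^{ω(m)}`:
the first `k₁` letters are from `{x, x*}`, the remaining ones from `{y, y*}`,
with star-parities given by `ω` (`true` = starred). -/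
def altProd (x y : A) (m k₁ : ℕ) (ω : Fin m → Bool) : A :=
  (List.ofFn (fun t : Fin m =>
    if t.val < k₁ then (if ω t then star x else x)
    else (if ω t then star y else y))).prod

/-- The factor of the sets `P_{i,j}(x,y)`: for odd length the alternating product itself,
for even length the centered alternating product `z - φ(z)·1`. -/
noncomputable def facElt (φ : A → ℂ) (x y : A) (m k₁ : ℕ) (ω : Fin m → Bool) : A :=
  if Odd m then altProd x y m k₁ ω
  else altProd x y m k₁ ω - φ (altProd x y m k₁ ω) • (1 : A)

/-- Condition (3.6): the expectations of the admissible products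
`p_{i₁,i₂} p_{i₂,i₃} ⋯ p_{i_{n-1},i_n}` of factors from the sets `P_{i,j}(x,y)` vanish.
Factor `i` is an alternating word of length `len i ≥ 1` with `kk i` letters from
`{x, x*}` followed by `len i - kk i` letters from `{y, y*}`; the chain condition links the
second index of each factor with the first index of the next one; and the factors are
ordered so that either (i) the `x`-only factors precede the `y`-only factors, or (ii)
exactly one factor mixes letters of both types, with `x`-only factors before it and
`y`-only factors after it. -/
noncomputable def Condition36 (φ : A → ℂ) (x y : A) : Prop :=
  ∀ N : ℕ, 1 ≤ N → ∀ len kk : Fin N → ℕ, ∀ ω : (i : Fin N) → Fin (len i) → Bool,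
    (∀ i, 1 ≤ len i) →
    (∀ i, kk i ≤ len i) →
    (∀ i, (List.ofFn (ω i)).Chain' (· ≠ ·)) →
    (∀ i : Fin N, ∀ h : i.val + 1 < N,
      (List.ofFn (ω ⟨i.val + 1, h⟩)).headD false =
        (if Odd (len i) then (List.ofFn (ω i)).headD false
          else !(List.ofFn (ω i)).headD false)) →
    ((∃ m : ℕ, m ≤ N ∧ (∀ i : Fin N, i.val < m → kk i = len i) ∧
        (∀ i : Fin N, m ≤ i.val → kk i = 0)) ∨
     (∃ m : Fin N, (∀ i : Fin N, i.val < m.val → kk i = len i) ∧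
        0 < kk m ∧ kk m < len m ∧ (∀ i : Fin N, m.val < i.val → kk i = 0))) →
    φ (List.ofFn (fun i => facElt φ x y (len i) (kk i) (ω i))).prod = 0

/-- The pairs `(x, y)` and `(x', y')` have the same bi-`*`-distribution. -/
def SameBiDist (φ : A → ℂ) (x y x' y' : A) : Prop :=
  ∀ n : ℕ, 1 ≤ n → ∀ k : ℕ, k ≤ n → ∀ ω : Fin n → Bool,
    φ (altProd x y n k ω) = φ (altProd x' y' n k ω)

/-- A Haar unitary. -/
def IsHaarUnitary (φ : A → ℂ) (u : A) : Prop :=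
  u * star u = 1 ∧ star u * u = 1 ∧
  ∀ n : ℕ, 1 ≤ n → φ (u ^ n) = 0 ∧ φ ((star u) ^ n) = 0

/-- `*`-freeness of a family of subsets: alternating products of centered elements of the
generated unital `*`-subalgebras have zero expectation. -/
def FreeFamily (φ : A → ℂ) {ι : Type*} (S : ι → Set A) : Prop :=
  ∀ m : ℕ, 1 ≤ m → ∀ idx : Fin m → ι,
    (∀ i : Fin m, ∀ h : i.val + 1 < m, idx i ≠ idx ⟨i.val + 1, h⟩) →
    ∀ a : Fin m → A,
      (∀ i, a i ∈ StarAlgebra.adjoin ℂ (S (idx i)) ∧ φ (a i) = 0) →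
      φ (List.ofFn a).prod = 0

end

section Helpers
set_option linter.unusedSectionVars false
variable {A : Type*} [Ring A] [Algebra ℂ A] [StarRing A] [StarModule ℂ A]

/-- Value of a letter: first component `true` means `y`, second `true` means starred. -/
def letterVal (x y : A) (a : Bool × Bool) : A :=
  if a.1 = false then (if a.2 then star x else x) else (if a.2 then star y else y)

def wordVal (x y : A) (w : List (Bool × Bool)) : A := (w.map (letterVal x y)).prod

/-- All `x` letters precede all `y` letters. -/
def SortedWord (w : List (Bool × Bool)) : Prop := w.Pairwise (fun a b => a.1 = true → b.1 = true)

def xCount (w : List (Bool × Bool)) : ℕ := w.countP (fun a => !a.1)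

noncomputable def ctr (φ : A →ₗ[ℂ] ℂ) (x y : A) (b : List (Bool × Bool)) : ℂ :=
  if Odd b.length then 0 else φ (wordVal x y b)

noncomputable def blockFac (φ : A →ₗ[ℂ] ℂ) (x y : A) (b : List (Bool × Bool)) : A :=
  wordVal x y b - ctr φ x y b • (1 : A)

theorem wordVal_append (x y : A) (v w : List (Bool × Bool)) :
    wordVal x y (v ++ w) = wordVal x y v * wordVal x y w := by
  simp [wordVal]

theorem wordVal_cons (x y : A) (a : Bool × Bool) (w : List (Bool × Bool)) :
    wordVal x y (a :: w) = letterVal x y a * wordVal x y w := by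
  simp [wordVal]

theorem wordVal_nil (x y : A) : wordVal x y [] = 1 := by
  simp [wordVal]

theorem letter_star (x y : A) (i : Bool) :
    letterVal x y (i, true) = star (letterVal x y (i, false)) := by
  cases i <;> simp [letterVal]

theorem letter_u (x y u : A) (i : Bool) :
    letterVal (u * x) (u * y) (i, false) = u * letterVal x y (i, false) := by
  cases i <;> simp [letterVal]

theorem letter_u_star (x y u : A) (i : Bool) :
    letterVal (u * x) (u * y) (i, true) = letterVal x y (i, true) * star u := by
  rw [letter_star, letter_u, star_mul, ← letter_star]

theorem alt_word (x y u : A) (hu : u * star u = 1 ∧ star u * u = 1) :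
    ∀ (n : ℕ) (b : List (Bool × Bool)), b.length = 2 * n → b.IsChain (fun p q => p.2 ≠ q.2) →
      ((∀ p ∈ b.head?, p.2 = true) → wordVal (u * x) (u * y) b = wordVal x y b) ∧
      ((∀ p ∈ b.head?, p.2 = false) →
        wordVal (u * x) (u * y) b = u * wordVal x y b * star u)
  | 0, b, hl, _ => by
    have : b = [] := by simpa using hl
    subst this
    simp [wordVal, hu.1]
  | n + 1, [], hl, _ => by simp at hl
  | n + 1, [a], hl, _ => by simp at hl; omega
  | n + 1, (i, s) :: (j, t) :: b, hl, hc => by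
    have hl' : b.length = 2 * n := by simp at hl; omega
    rw [List.isChain_cons_cons] at hc
    have hc2 := hc.2.tail
    simp only [List.tail_cons] at hc2
    have hst := hc.1
    have hb := hc.2
    rw [List.isChain_cons] at hb
    obtain ⟨ih1, ih2⟩ := alt_word x y u hu n b hl' hc2
    constructor
    · intro h
      have hs : s = true := by simpa using h
      subst hs
      have ht : t = false := by simpa using hst
      subst ht
      have := ih1 (fun p hp => by simpa using (hb.1 p hp))
      rw [wordVal_cons, wordVal_cons, wordVal_cons, wordVal_cons, this, letter_u_star, letter_u]
      simp only [mul_assoc]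
      rw [← mul_assoc (star u) u, hu.2, one_mul]
    · intro h
      have hs : s = false := by simpa using h
      subst hs
      have ht : t = true := by simpa using hst
      subst ht
      have := ih2 (fun p hp => by simpa using (hb.1 p hp))
      rw [wordVal_cons, wordVal_cons, wordVal_cons, wordVal_cons, this, letter_u_star, letter_u]
      simp only [mul_assoc]
      rw [← mul_assoc (star u) u, hu.2, one_mul]

theorem ctr_eq (φ : A →ₗ[ℂ] ℂ) (htr : ∀ a b : A, φ (a * b) = φ (b * a))
    (x y u : A) (hu : u * star u = 1 ∧ star u * u = 1) (b : List (Bool × Bool))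
    (hc : b.IsChain (fun p q => p.2 ≠ q.2)) : ctr φ x y b = ctr φ (u * x) (u * y) b := by
  unfold ctr
  split_ifs with h
  · rfl
  · rw [Nat.not_odd_iff_even] at h
    obtain ⟨n, hn⟩ := h
    obtain ⟨h1, h2⟩ := alt_word x y u hu n b (by omega) hc
    cases b with
    | nil => simp [wordVal]
    | cons a b =>
      cases hs : a.2 with
      | true => rw [h1 (by simpa using hs)]
      | false => rw [h2 (by simpa using hs), htr, ← mul_assoc, hu.2, one_mul]

theorem expand_blocks (φ : A →ₗ[ℂ] ℂ) (x y x' y' : A) (n : ℕ)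
    (ih : ∀ w, SortedWord w → w.length < n → φ (wordVal x y w) = φ (wordVal x' y' w)) :
    ∀ (L : List (List (Bool × Bool))) (p : List (Bool × Bool)),
      (∀ b ∈ L, b ≠ [] ∧ ctr φ x y b = ctr φ x' y' b) →
      SortedWord (p ++ L.flatten) → (p ++ L.flatten).length ≤ n →
      φ (wordVal x y p * (L.map (blockFac φ x y)).prod) - φ (wordVal x y (p ++ L.flatten)) =
      φ (wordVal x' y' p * (L.map (blockFac φ x' y')).prod) - φ (wordVal x' y' (p ++ L.flatten))
  | [], p, _, _, _ => by simp
  | b :: L, p, hL, hs, hn => by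
    have hb := hL b (by simp)
    have hL' : ∀ b ∈ L, b ≠ [] ∧ ctr φ x y b = ctr φ x' y' b :=
      fun c hc => hL c (by simp [hc])
    have hpos : 0 < b.length := List.length_pos_iff.mpr hb.1
    have e1 := expand_blocks φ x y x' y' n ih L (p ++ b) hL'
      (by simpa using hs) (by simpa using hn)
    have hs2 : SortedWord (p ++ L.flatten) := by
      refine List.Pairwise.sublist ?_ hs
      simp
    have hn2 : (p ++ L.flatten).length < n := by
      simp at hn ⊢
      omega
    have e2 := expand_blocks φ x y x' y' n ih L p hL' hs2 hn2.le
    have e3 := ih _ hs2 hn2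
    have key : ∀ X Y : A, wordVal X Y p * ((b :: L).map (blockFac φ X Y)).prod =
        wordVal X Y (p ++ b) * (L.map (blockFac φ X Y)).prod -
        ctr φ X Y b • (wordVal X Y p * (L.map (blockFac φ X Y)).prod) := by
      intro X Y
      rw [List.map_cons, List.prod_cons, blockFac, wordVal_append]
      simp only [sub_mul, mul_sub, smul_mul_assoc, one_mul, mul_smul_comm, mul_assoc]
    rw [key, key, map_sub, map_sub, map_smul, map_smul, ← hb.2]
    simp only [smul_eq_mul, List.flatten_cons, ← List.append_assoc]
    rw [e3] at e2
    have e4 := sub_left_injective e2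
    rw [e4]
    linear_combination e1

theorem xCount_spec : ∀ (b : List (Bool × Bool)), SortedWord b → ∀ (t : ℕ) (h : t < b.length),
    (t < xCount b ↔ b[t].1 = false)
  | [], _, t, h => by simp at h
  | a :: b, hs, t, h => by
    have hs' := List.pairwise_cons.mp hs
    cases ha : a.1 with
    | true =>
      have h0 : xCount (a :: b) = 0 := by
        unfold xCount
        rw [List.countP_eq_zero]
        intro c hc
        rcases List.mem_cons.mp hc with rfl | hc
        · simp [ha]
        · simp [hs'.1 c hc ha]
      rw [h0]
      have : (a :: b)[t].1 = true := by
        rcases List.mem_cons.mp (List.getElem_mem h) with e | e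
        · rw [e, ha]
        · exact hs'.1 _ e ha
      simp [this]
    | false =>
      have h0 : xCount (a :: b) = xCount b + 1 := by
        simp [xCount, ha]
      rw [h0]
      cases t with
      | zero => simp [ha]
      | succ t =>
        have := xCount_spec b hs'.2 t (by simpa using h)
        simpa using this

theorem xCount_le (b : List (Bool × Bool)) : xCount b ≤ b.length := List.countP_le_length

theorem xCount_eq_len (b : List (Bool × Bool)) : xCount b = b.length ↔ ∀ a ∈ b, a.1 = false := by
  simp [xCount, List.countP_eq_length]

theorem xCount_eq_zero (b : List (Bool × Bool)) : xCount b = 0 ↔ ∀ a ∈ b, a.1 = true := by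
  simp [xCount, List.countP_eq_zero]

theorem altProd_word (x y : A) (b : List (Bool × Bool)) (hs : SortedWord b) :
    altProd x y b.length (xCount b) (fun t => (b[t.val]).2) = wordVal x y b := by
  unfold altProd wordVal
  congr 1
  apply List.ext_getElem
  · simp
  · intro t h1 h2
    have ht : t < b.length := by simpa using h1
    simp only [List.getElem_ofFn, List.getElem_map, letterVal, xCount_spec b hs t ht]

theorem facElt_word (φ : A →ₗ[ℂ] ℂ) (x y : A) (b : List (Bool × Bool)) (hs : SortedWord b) :
    facElt (fun z => φ z) x y b.length (xCount b) (fun t => (b[t.val]).2) = blockFac φ x y b := by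
  unfold facElt blockFac ctr
  rw [altProd_word x y b hs]
  split_ifs <;> simp

theorem alt_last : ∀ (b : List (Bool × Bool)) (h : b ≠ []), b.IsChain (fun p q => p.2 ≠ q.2) →
    (b.getLast h).2 = if Odd b.length then (b.head h).2 else !(b.head h).2
  | [a], _, _ => by simp
  | a :: c :: b, _, hc => by
    rw [List.isChain_cons_cons] at hc
    have := alt_last (c :: b) (by simp) hc.2
    rw [List.getLast_cons (by simp), this]
    have h1 := hc.1
    have hca : c.2 = !a.2 := by cases h : a.2 <;> cases h' : c.2 <;> simp_all
    have hodd : Odd (a :: c :: b).length ↔ ¬ Odd (c :: b).length := by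
      rw [List.length_cons (a := a), Nat.odd_add_one]
    simp only [List.head_cons, hca, hodd]
    split_ifs <;> simp

theorem cond_blocks (φ : A →ₗ[ℂ] ℂ) (x y : A) (h36 : Condition36 (fun z => φ z) x y)
    (w : List (Bool × Bool)) (hw : w ≠ []) (hs : SortedWord w) :
    φ ((w.splitBy (fun p q => p.2 != q.2)).map (blockFac φ x y)).prod = 0 := by
  set L := w.splitBy (fun p q => p.2 != q.2) with hL
  have hfl : L.flatten = w := List.flatten_splitBy _ _
  have hne : L ≠ [] := List.splitBy_ne_nil.mpr hw
  have hbne : ∀ b ∈ L, b ≠ [] := fun b hb => List.ne_nil_of_mem_splitBy hb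
  have hch : ∀ b ∈ L, b.IsChain (fun p q => p.2 ≠ q.2) := by
    intro b hb
    have := List.isChain_of_mem_splitBy hb
    simpa using this
  have hlast := List.isChain_getLast_head_splitBy (fun p q : Bool × Bool => p.2 != q.2) w
  rw [← hL] at hlast
  have hs' := hs
  unfold SortedWord at hs'
  rw [← hfl, List.pairwise_flatten] at hs'
  obtain ⟨hsb, hpw⟩ := hs'
  have hpw' : ∀ (i j : ℕ) (hi : i < L.length) (hj : j < L.length), i < j →
      ∀ a ∈ L[i], ∀ c ∈ L[j], a.1 = true → c.1 = true := by
    intro i j hi hj hij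
    exact List.pairwise_iff_getElem.mp hpw i j hi hj hij
  have hmem : ∀ i : Fin L.length, L[i.val] ∈ L := fun i => List.getElem_mem _
  have key := h36 L.length (List.length_pos_iff.mpr hne)
    (fun i => (L[i.val]).length) (fun i => xCount L[i.val])
    (fun i t => ((L[i.val])[t.val]).2)
    (fun i => List.length_pos_iff.mpr (hbne _ (hmem i)))
    (fun i => xCount_le _) ?_ ?_ ?_
  · rw [← key]
    congr 2
    apply List.ext_getElem
    · simp
    · intro i h1 h2
      have hi : i < L.length := by simpa using h1
      simp only [List.getElem_map, List.getElem_ofFn]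
      exact (facElt_word φ x y L[i] (hsb _ (List.getElem_mem _))).symm
  · intro i
    have e : List.ofFn (fun t : Fin (L[i.val]).length => ((L[i.val])[t.val]).2)
        = (L[i.val]).map Prod.snd := by
      apply List.ext_getElem <;> simp
    show List.IsChain _ _
    rw [e, List.isChain_map]
    exact hch _ (hmem i)
  · intro i h
    have e : ∀ b : List (Bool × Bool), List.ofFn (fun t : Fin b.length => (b[t.val]).2)
        = b.map Prod.snd := by
      intro b
      apply List.ext_getElem <;> simp
    have ehd : ∀ (b : List (Bool × Bool)) (hb : b ≠ []), (b.map Prod.snd).headD false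
        = (b.head hb).2 := by
      intro b hb
      cases b with
      | nil => exact absurd rfl hb
      | cons a b => simp
    obtain ⟨ha, hb, hr⟩ := List.isChain_iff_getElem.mp hlast i.val h
    rw [e, e, ehd _ ha, ehd _ hb, ← alt_last _ ha (hch _ (hmem i))]
    exact Eq.symm (bne_eq_false_iff_eq.mp hr)
  · by_cases hmix : ∃ m : Fin L.length, 0 < xCount L[m.val] ∧ xCount L[m.val] < (L[m.val]).length
    · right
      obtain ⟨m, h0, h1⟩ := hmix
      refine ⟨m, ?_, h0, h1, ?_⟩
      · intro i him
        rw [xCount_eq_len]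
        intro a ha
        by_contra hcon
        have : xCount L[m.val] = 0 := by
          rw [xCount_eq_zero]
          intro c hc
          exact hpw' i.val m.val i.2 m.2 him a ha c hc (by simpa using hcon)
        omega
      · intro i him
        rw [xCount_eq_zero]
        intro a ha
        by_contra hcon
        have : xCount L[m.val] = (L[m.val]).length := by
          rw [xCount_eq_len]
          intro c hc
          by_contra hcc
          exact hcon (hpw' m.val i.val m.2 i.2 him c hc a ha (by simpa using hcc))
        omega
    · left
      have hpure : ∀ i : Fin L.length, xCount L[i.val] ≠ 0 →
          xCount L[i.val] = (L[i.val]).length := by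
        intro i hi
        have := xCount_le L[i.val]
        by_contra hcon
        exact hmix ⟨i, by omega, by omega⟩
      by_cases hex : ∃ m : ℕ, ∃ h : m < L.length, xCount L[m] = 0
      · classical
        obtain ⟨hm, hm0⟩ := Nat.find_spec hex
        have hmin := fun k (hk : k < Nat.find hex) => Nat.find_min hex hk
        generalize Nat.find hex = m at hm hm0 hmin
        refine ⟨m, hm.le, ?_, ?_⟩
        · intro i him
          exact hpure i (fun h => hmin i.val him ⟨i.2, h⟩)
        · intro i him
          rcases him.eq_or_lt with h | h
          · subst h
            exact hm0
          · rw [xCount_eq_zero] at hm0 ⊢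
            intro a ha
            have hne' := hbne _ (List.getElem_mem hm)
            have hh := List.head_mem hne'
            exact hpw' m i.val hm i.2 h _ hh a ha (hm0 _ hh)
      · refine ⟨L.length, le_rfl, ?_, ?_⟩
        · intro i _
          exact hpure i (fun h => hex ⟨i.val, i.2, h⟩)
        · intro i hi
          exact absurd i.2 (by omega)

theorem word_eq (φ : A →ₗ[ℂ] ℂ) (htr : ∀ a b : A, φ (a * b) = φ (b * a))
    (x y u : A) (hu : u * star u = 1 ∧ star u * u = 1)
    (h36 : Condition36 (fun z => φ z) x y)
    (h36u : Condition36 (fun z => φ z) (u * x) (u * y)) :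
    ∀ (n : ℕ) (w : List (Bool × Bool)), SortedWord w → w.length < n →
      φ (wordVal x y w) = φ (wordVal (u * x) (u * y) w)
  | 0, w, _, h => by simp at h
  | n + 1, w, hs, h => by
    by_cases hw : w = []
    · subst hw
      simp [wordVal]
    · have hfl := List.flatten_splitBy (fun p q : Bool × Bool => p.2 != q.2) w
      have e := expand_blocks φ x y (u * x) (u * y) n
        (fun w hs hl => word_eq φ htr x y u hu h36 h36u n w hs hl)
        (w.splitBy (fun p q => p.2 != q.2)) []
        (fun b hb => ⟨List.ne_nil_of_mem_splitBy hb, ctr_eq φ htr x y u hu b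
          (by simpa using List.isChain_of_mem_splitBy hb)⟩)
        (by simpa [hfl] using hs) (by simp only [List.nil_append, hfl]; omega)
      simp only [List.nil_append, hfl, wordVal_nil, one_mul] at e
      rw [cond_blocks φ x y h36 w hw hs, cond_blocks φ _ _ h36u w hw hs] at e
      linear_combination -e

theorem altProd_eq_word (x y : A) (n k : ℕ) (ω : Fin n → Bool) :
    altProd x y n k ω = wordVal x y (List.ofFn (fun t : Fin n => (decide (k ≤ t.val), ω t))) := by
  unfold altProd wordVal
  rw [List.map_ofFn]
  congr 2
  funext t
  simp [letterVal]

theorem sorted_ofFn (n k : ℕ) (ω : Fin n → Bool) :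
    SortedWord (List.ofFn (fun t : Fin n => (decide (k ≤ t.val), ω t))) := by
  unfold SortedWord
  rw [List.pairwise_ofFn]
  intro i j hij
  simp only [decide_eq_true_eq]
  intro h
  have : i.val < j.val := hij
  omega

end Helpers

/-- In a tracial `*`-probability space, if both `(x, y)` and `(ux, uy)` (with `u` a
unitary) satisfy condition (3.6), then `(x, y)` and `(ux, uy)` have the same
bi-`*`-distribution. -/
theorem sameBiDist_of_both_condition36
    {A : Type*} [Ring A] [Algebra ℂ A] [StarRing A] [StarModule ℂ A]
    (φ : A →ₗ[ℂ] ℂ) (hφ1 : φ 1 = 1) (hφs : ∀ a : A, φ (star a) = starRingEnd ℂ (φ a))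
    (htr : ∀ a b : A, φ (a * b) = φ (b * a))
    (x y u : A) (hu : u * star u = 1 ∧ star u * u = 1)
    (h36 : Condition36 (fun z => φ z) x y)
    (h36u : Condition36 (fun z => φ z) (u * x) (u * y)) :
    SameBiDist (fun z => φ z) x y (u * x) (u * y) := by
  intro n _ k _ ω
  simp only [altProd_eq_word]
  exact word_eq φ htr x y u hu h36 h36u _ _ (sorted_ofFn n k ω) (Nat.lt_succ_self _)
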